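/- ('If' direction of the ill-posedness Lemma, for an arbitrary scoring function.) Let s : 𝓜 → ℝ be any scoring function. If for all cues m₁, m₀ with pM(m₁) > 0, pM(m₀) > 0, T(m₁) = true and T(m₀) = false one has s(m₀) < s(m₁), then there exists a threshold τ ∈ ℝ with PxAcc(s, τ) = 1. -/

import Mathlib

open Finset

/-- Marginal probability of a cue `m` under the joint pmf `p` on `M × Bool`. -/
noncomputable def pM {M : Type*} (p : M × Bool → ℝ) (m : M) : ℝ :=
  p (m, true) + p (m, false)

/-- Pixel-wise localization accuracy of scoring rule `s` at threshold `τ`. -/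
noncomputable def pxAcc {M : Type*} [Fintype M] (p : M × Bool → ℝ) (T : M → Bool)
    (s : M → ℝ) (τ : ℝ) : ℝ :=
  ∑ m ∈ univ.filter (fun m => T m = true ∧ τ ≤ s m), pM p m
    + ∑ m ∈ univ.filter (fun m => T m = false ∧ s m < τ), pM p m

theorem exists_forall_lt_and_forall_lt {ι α : Type*} [LinearOrder α] [DenselyOrdered α]
    [NoMinOrder α] [NoMaxOrder α] [Nonempty α] (A B : Finset ι) (f : ι → α)
    (h : ∀ a ∈ A, ∀ b ∈ B, f a < f b) :
    ∃ c, (∀ a ∈ A, f a < c) ∧ ∀ b ∈ B, c < f b := by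
  simpa using Order.exists_between_finsets (A.image f) (B.image f) (by simpa using h)

section Accuracy

variable {M : Type*}

theorem pM_nonneg {p : M × Bool → ℝ} (hp : ∀ x, 0 ≤ p x) (m : M) : 0 ≤ pM p m :=
  add_nonneg (hp _) (hp _)

variable [Fintype M]

theorem sum_pM (p : M × Bool → ℝ) : ∑ m, pM p m = ∑ x, p x := by
  simp [pM, Fintype.sum_prod_type]

theorem pxAcc_eq_sum_filter (p : M × Bool → ℝ) (T : M → Bool) (s : M → ℝ) (τ : ℝ) :
    pxAcc p T s τ = ∑ m with (T m = true ↔ τ ≤ s m), pM p m := by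
  simp only [pxAcc, sum_filter, ← sum_add_distrib]
  refine sum_congr rfl fun m _ => ?_
  cases T m <;> simp

theorem pxAcc_eq_sum_of_forall_eq_true_iff_le {p : M × Bool → ℝ} {T : M → Bool}
    {s : M → ℝ} {τ : ℝ}
    (h : ∀ m, pM p m ≠ 0 → (T m = true ↔ τ ≤ s m)) :
    pxAcc p T s τ = ∑ x, p x := by
  rw [pxAcc_eq_sum_filter, sum_filter_of_ne fun m _ => h m, sum_pM]

end Accuracy

/-- 'If' direction of the ill-posedness lemma for an arbitrary scoring function:
strict separation of positive-probability foreground cues from background cues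
implies perfect pixel-wise accuracy at some threshold. -/
theorem perfect_accuracy_of_separation {M : Type*} [Fintype M] [Nonempty M]
    (p : M × Bool → ℝ) (hp : ∀ x, 0 ≤ p x) (hsum : ∑ x, p x = 1)
    (T : M → Bool) (s : M → ℝ)
    (hsep : ∀ m₁ m₀ : M, 0 < pM p m₁ → 0 < pM p m₀ → T m₁ = true → T m₀ = false →
      s m₀ < s m₁) :
    ∃ τ : ℝ, pxAcc p T s τ = 1 := by
  obtain ⟨τ, hbg, hfg⟩ := exists_forall_lt_and_forall_lt
    {m | 0 < pM p m ∧ T m = false} {m | 0 < pM p m ∧ T m = true} s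
    (by simpa using fun m₀ h₀ hT₀ m₁ h₁ hT₁ => hsep m₁ m₀ h₁ h₀ hT₁ hT₀)
  simp only [mem_filter_univ, and_imp] at hbg hfg
  refine ⟨τ, (pxAcc_eq_sum_of_forall_eq_true_iff_le fun m hm => ?_).trans hsum⟩
  have hpos : 0 < pM p m := (pM_nonneg hp m).lt_of_ne' hm
  cases hT : T m with
  | false => simpa using hbg m hpos hT
  | true => simpa using (hfg m hpos hT).le
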